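/- Let R ⊆ S be an integral FCP ring extension and let T ∈ [R,S] be the t-closure of R in S (i.e., R ⊆ T is infra-integral and T ⊆ S is t-closed). Assume T ⊆ S is catenarian, and set m := ℓ[R,T] and r := ℓ[T,S]. Then every maximal chain of [R,S] from R to S that contains T has length m + r. -/

import Mathlib

/-- A maximal chain of length `n` from `T` to `U`: each step is a covering. -/
def IsMaxChainFromTo {α : Type*} [PartialOrder α] (T U : α) (n : ℕ)
    (c : Fin (n + 1) → α) : Prop :=
  c 0 = T ∧ c (Fin.last n) = U ∧ ∀ i : Fin n, c i.castSucc ⋖ c i.succ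

/-- The subextension determined by `T ≤ U` is catenarian: all maximal chains from
`T` to `U` have the same length. -/
def IsCatenarianFromTo {α : Type*} [PartialOrder α] (T U : α) : Prop :=
  ∀ (n m : ℕ) (c : Fin (n + 1) → α) (d : Fin (m + 1) → α),
    IsMaxChainFromTo T U n c → IsMaxChainFromTo T U m d → n = m

/-- The extension `R ⊆ S` has FCP: every chain of `R`-subalgebras of `S` is finite. -/
def IsFCPExt (R S : Type*) [CommRing R] [CommRing S] [Algebra R S] : Prop :=
  ∀ C : Set (Subalgebra R S), IsChain (· ≤ ·) C → C.Finite

/-- The extension `R ⊆ S` is catenarian. -/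
def IsCatenarianExt (R S : Type*) [CommRing R] [CommRing S] [Algebra R S] : Prop :=
  IsCatenarianFromTo (⊥ : Subalgebra R S) ⊤

/-- The length `ℓ[T,U]`: the supremum of lengths of chains from `T` to `U`. -/
noncomputable def extLength {α : Type*} [PartialOrder α] (T U : α) : ℕ :=
  sSup {n | ∃ c : Fin (n + 1) → α, StrictMono c ∧ c 0 = T ∧ c (Fin.last n) = U}

/-- The residual extension `κ_R(P) → κ_S(Q)` (for `P = Q ∩ R`) is an isomorphism. -/
def ResidualExtIsIso {R S : Type*} [CommRing R] [CommRing S] (f : R →+* S)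
    (Q : Ideal S) [Q.IsPrime] : Prop :=
  Function.Bijective
    (IsLocalRing.ResidueField.map
      (Localization.localRingHom (Q.comap f) Q f rfl))

/-- `R ⊆ S` is infra-integral: it is integral and all residual extensions
are isomorphisms. -/
def IsInfraIntegral (R S : Type*) [CommRing R] [CommRing S] [Algebra R S] : Prop :=
  Algebra.IsIntegral R S ∧
    ∀ (Q : Ideal S) (_ : Q.IsPrime), ResidualExtIsIso (algebraMap R S) Q

/-- The subextension `T ⊆ S` is t-closed. -/
def IsTClosedIn {R S : Type*} [CommRing R] [CommRing S] [Algebra R S]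
    (T : Subalgebra R S) : Prop :=
  ∀ (b : S), ∀ r ∈ T, b ^ 2 - r * b ∈ T → b ^ 3 - r * b ^ 2 ∈ T → b ∈ T

/-- `T` is the t-closure of `R` in `S`: `R ⊆ T` is infra-integral and `T ⊆ S`
is t-closed. -/
def IsTClosure {R S : Type*} [CommRing R] [CommRing S] [Algebra R S]
    (T : Subalgebra R S) : Prop :=
  IsInfraIntegral R T ∧ IsTClosedIn T

/-!
Only the part from `R` to `T` needs an argument, the part from `T` to `S` being catenarian by
hypothesis. Each covering `A ⋖ B` of subalgebras of the infra-integral extension `T` is a covering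
of `R`-submodules, so maximal chains from `R` to `T` are composition series of `R`-submodules and
the Jordan–Hölder theorem applies.

For the covering, Nakayama's argument gives an ideal `J` of `B` inside `A` whose trace on `A` is
maximal. Any `b ∈ B \ A` can be moved by an element of `R` into a maximal ideal `Q` of `B` above
`J`. If `Q'` is a maximal ideal containing the colon ideal `(J : b)`, then `A + b Q'` is a ring
that does not contain `b`, so `b Q' ⊆ A`. As `B = R + Q'`, this yields `B b ⊆ A + R b`; hence
`A + R b` is a ring, and it must be `B`.
-/

/-! ### Maximal chains and lengths -/

section Chains

variable {α : Type*} [PartialOrder α] {T U : α} {n : ℕ} {c : Fin (n + 1) → α}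

lemma IsMaxChainFromTo.strictMono (hc : IsMaxChainFromTo T U n c) : StrictMono c :=
  Fin.strictMono_iff_lt_succ.2 fun j => (hc.2.2 j).lt

lemma IsMaxChainFromTo.le_right (hc : IsMaxChainFromTo T U n c) (i : Fin (n + 1)) : c i ≤ U :=
  hc.2.1 ▸ hc.strictMono.monotone (Fin.le_last i)

lemma IsMaxChainFromTo.take (hc : IsMaxChainFromTo T U n c) (i : Fin (n + 1)) :
    IsMaxChainFromTo T (c i) i fun j => c (j.castLE i.isLt) :=
  ⟨hc.1, rfl, fun j => hc.2.2 (j.castLE i.is_le)⟩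

lemma IsMaxChainFromTo.drop (hc : IsMaxChainFromTo T U n c) (i : Fin (n + 1)) :
    IsMaxChainFromTo (c i) U (n - i) fun j => c ⟨i + j, by omega⟩ := by
  refine ⟨rfl, ?_, fun j => hc.2.2 ⟨i + j, by omega⟩⟩
  rw [← hc.2.1]
  exact congrArg c (Fin.ext (Nat.add_sub_of_le i.is_le))

lemma IsMaxChainFromTo.map {β : Type*} [PartialOrder β] {f : α → β}
    (hc : IsMaxChainFromTo T U n c) (hf : ∀ x y, x ⋖ y → y ≤ U → f x ⋖ f y) :
    IsMaxChainFromTo (f T) (f U) n (f ∘ c) :=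
  ⟨congrArg f hc.1, congrArg f hc.2.1, fun j => hf _ _ (hc.2.2 j) (hc.le_right _)⟩

lemma IsCatenarianFromTo.of_map {β : Type*} [PartialOrder β] {f : α → β}
    (hf : ∀ x y, x ⋖ y → y ≤ U → f x ⋖ f y) (h : IsCatenarianFromTo (f T) (f U)) :
    IsCatenarianFromTo T U :=
  fun n m _ _ hc hd => h n m _ _ (hc.map hf) (hd.map hf)

lemma exists_isMaxChainFromTo_le_length_of_strictMono [WellFoundedLT α] [WellFoundedGT α]
    (hc : StrictMono c) : ∃ m, n ≤ m ∧ ∃ d, IsMaxChainFromTo (c 0) (c (Fin.last n)) m d := by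
  obtain ⟨t, f, hf, hf0, hf1⟩ := LTSeries.exists_relSeries_covBy
    (⟨n, c, fun j => hc j.castSucc_lt_succ⟩ : LTSeries α)
  have hlen : n ≤ t.length := by simpa using Fintype.card_le_of_embedding f
  refine ⟨t.length, hlen, t, ?_, ?_, t.step⟩
  · rw [← hf0]
    exact congrFun hf 0
  · rw [← hf1]
    exact congrFun hf (Fin.last n)

lemma IsCatenarianFromTo.extLength_eq [WellFoundedLT α] [WellFoundedGT α]
    (h : IsCatenarianFromTo T U) (hc : IsMaxChainFromTo T U n c) : extLength T U = n := by
  refine IsGreatest.csSup_eq ⟨⟨c, hc.strictMono, hc.1, hc.2.1⟩, ?_⟩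
  rintro k ⟨d, hd, rfl, rfl⟩
  obtain ⟨m, hkm, e, he⟩ := exists_isMaxChainFromTo_le_length_of_strictMono hd
  exact hkm.trans_eq (h _ _ _ _ he hc)

lemma wellFoundedGT_of_finite_chains
    (h : ∀ C : Set α, IsChain (· ≤ ·) C → C.Finite) : WellFoundedGT α := by
  refine ⟨RelEmbedding.wellFounded_iff_isEmpty.2 ⟨fun f => ?_⟩⟩
  have hf : StrictMono f := fun a b hab => f.map_rel_iff.2 hab
  exact Set.infinite_range_of_injective f.injective (h _ hf.monotone.isChain_range)

lemma wellFoundedLT_of_finite_chains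
    (h : ∀ C : Set α, IsChain (· ≤ ·) C → C.Finite) : WellFoundedLT α :=
  have : WellFoundedGT αᵒᵈ := wellFoundedGT_of_finite_chains fun C hC =>
    h (OrderDual.toDual ⁻¹' C) hC.symm
  inferInstanceAs (WellFoundedLT αᵒᵈᵒᵈ)

end Chains

lemma isCatenarianFromTo_submodule {R M : Type*} [Ring R] [AddCommGroup M] [Module R M]
    (N P : Submodule R M) : IsCatenarianFromTo N P := fun n m c d hc hd =>
  let s : CompositionSeries (Submodule R M) := ⟨n, c, hc.2.2⟩
  let t : CompositionSeries (Submodule R M) := ⟨m, d, hd.2.2⟩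
  (CompositionSeries.jordan_holder s t (hc.1.trans hd.1.symm)
    (hc.2.1.trans hd.2.1.symm)).length_eq

/-! ### Residue fields -/

/-- Every residue field of `B` at a maximal ideal is a quotient of `R`. For integral extensions this
is what infra-integrality says about the maximal ideals. -/
def IsResiduallySurjective (R B : Type*) [CommRing R] [CommRing B] [Algebra R B] : Prop :=
  ∀ Q : Ideal B, Q.IsMaximal → Function.Surjective (algebraMap R (B ⧸ Q))

lemma IsResiduallySurjective.exists_sub_algebraMap_mem {R B : Type*} [CommRing R] [CommRing B]
    [Algebra R B] (h : IsResiduallySurjective R B) {Q : Ideal B} (hQ : Q.IsMaximal) (x : B) :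
    ∃ r : R, x - algebraMap R B r ∈ Q := by
  obtain ⟨r, hr⟩ := h Q hQ (Ideal.Quotient.mk Q x)
  exact ⟨r, Ideal.Quotient.eq.1 hr.symm⟩

lemma IsInfraIntegral.isResiduallySurjective {R T : Type*} [CommRing R] [CommRing T]
    [Algebra R T] (h : IsInfraIntegral R T) : IsResiduallySurjective R T := by
  intro Q hQ x
  have := h.1
  have : (Q.comap (algebraMap R T)).IsMaximal :=
    Ideal.isMaximal_comap_of_isIntegral_of_isMaximal Q
  obtain ⟨y, hy⟩ := (h.2 Q inferInstance).2 (algebraMap (T ⧸ Q) Q.ResidueField x)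
  obtain ⟨r, rfl⟩ := Ideal.algebraMap_residueField_surjective _ y
  refine ⟨r, Q.injective_algebraMap_quotient_residueField (.trans ?_ hy)⟩
  exact (Ideal.ResidueField.map_algebraMap _ Q (algebraMap R T) rfl r).symm

lemma IsResiduallySurjective.of_injective {R B T : Type*} [CommRing R] [CommRing B] [CommRing T]
    [Algebra R B] [Algebra R T] (h : IsResiduallySurjective R T) (f : B →ₐ[R] T)
    (hf : Function.Injective f) [Algebra.IsIntegral R T] : IsResiduallySurjective R B := by
  intro Q hQ x
  obtain ⟨x, rfl⟩ := Ideal.Quotient.mk_surjective x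
  let _ : Algebra B T := f.toRingHom.toAlgebra
  have : IsScalarTower R B T := IsScalarTower.of_algebraMap_eq fun r => (f.commutes r).symm
  have : Algebra.IsIntegral B T := Algebra.IsIntegral.tower_top R
  obtain ⟨Q', hQ', rfl⟩ := Ideal.exists_ideal_over_maximal_of_isIntegral (S := T) Q
    (by rw [(RingHom.injective_iff_ker_eq_bot (algebraMap B T)).1 hf]; exact bot_le)
  obtain ⟨r, hr⟩ := h.exists_sub_algebraMap_mem hQ' (f x)
  refine ⟨r, (Ideal.Quotient.eq.2 ?_).symm⟩
  rw [Ideal.mem_comap, map_sub, ← IsScalarTower.algebraMap_apply]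
  exact hr

/-! ### Maximal proper subalgebras -/

lemma map_annihilator_quotient_subset {A B : Type*} [CommRing A] [CommRing B] [Algebra A B]
    (N : Submodule A B) : ((Module.annihilator A (B ⧸ N)).map (algebraMap A B) : Set B) ⊆ N := by
  intro y hy
  have hy' : y ∈ Module.annihilator A (B ⧸ N) • (⊤ : Submodule A B) := by
    rwa [Ideal.smul_top_eq_map]
  refine Submodule.smul_le.2 (fun a ha z _ => ?_) hy'
  rw [← Submodule.Quotient.mk_eq_zero, Submodule.Quotient.mk_smul]
  exact Module.mem_annihilator.1 ha _

section Coatom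

variable {R B : Type*} [CommRing R] [CommRing B] [Algebra R B] {A : Subalgebra R B} {b : B}

lemma ideal_subset_of_forall_sub_notMem (hA : IsCoatom A) (J : Ideal B)
    (hb : ∀ a ∈ A, b - a ∉ J) : (J : Set B) ⊆ A := by
  set C : Subalgebra R B := (A.map (Ideal.Quotient.mkₐ R J)).comap (Ideal.Quotient.mkₐ R J)
  have mem_C {x : B} : x ∈ C ↔ ∃ a ∈ A, x - a ∈ J := by
    simp only [C, Subalgebra.mem_comap, Subalgebra.mem_map, Ideal.Quotient.mkₐ_eq_mk]
    exact exists_congr fun a => and_congr_right fun _ => eq_comm.trans Ideal.Quotient.eq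
  have hAC : A ≤ C := fun a ha => mem_C.2 ⟨a, ha, by simp⟩
  have hC : C ≠ ⊤ := fun h => by
    obtain ⟨a, ha, hba⟩ := mem_C.1 (h ▸ Algebra.mem_top : b ∈ C)
    exact hb a ha hba
  have hCA : C = A := (hA.le_iff.1 hAC).resolve_left hC
  exact fun x hx => hCA ▸ mem_C.2 ⟨0, A.zero_mem, by simpa using hx⟩

lemma adjoin_singleton_eq_top_of_isCoatom (hA : IsCoatom A) (hb : b ∉ A) :
    Algebra.adjoin A {b} = ⊤ := by
  set C : Subalgebra R B := (Algebra.adjoin A {b}).restrictScalars R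
  have hAC : A ≤ C := fun a ha => (Algebra.adjoin A {b}).algebraMap_mem ⟨a, ha⟩
  have hbC : b ∈ C := Algebra.self_mem_adjoin_singleton A b
  have hC : C = ⊤ := (hA.le_iff.1 hAC).resolve_right fun h => hb (h.le hbC)
  exact Algebra.eq_top_iff.2 fun x => hC.ge Algebra.mem_top

lemma moduleFinite_of_isCoatom [Algebra.IsIntegral R B] (hA : IsCoatom A) :
    Module.Finite A B := by
  obtain ⟨b, -, hb⟩ := SetLike.exists_of_lt hA.lt_top
  have : Algebra.IsIntegral A B := Algebra.IsIntegral.tower_top R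
  have : Algebra.FiniteType A B :=
    ⟨⟨{b}, by simpa using adjoin_singleton_eq_top_of_isCoatom hA hb⟩⟩
  exact Algebra.IsIntegral.finite

lemma exists_ideal_subset_isMaximal_comap [Algebra.IsIntegral R B] (hA : IsCoatom A) :
    ∃ J : Ideal B, (J : Set B) ⊆ A ∧ (J.comap (algebraMap A B)).IsMaximal := by
  have : Module.Finite A B := moduleFinite_of_isCoatom hA
  obtain ⟨x, -, hx⟩ := SetLike.exists_of_lt hA.lt_top
  have hne : Subalgebra.toSubmodule (⊥ : Subalgebra A B) ≠ ⊤ := fun h => by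
    obtain ⟨a, rfl⟩ := Algebra.mem_bot.1 (h ▸ Submodule.mem_top :
      x ∈ Subalgebra.toSubmodule (⊥ : Subalgebra A B))
    exact hx a.2
  obtain ⟨N, hN, hAN⟩ := (eq_top_or_exists_le_coatom _).resolve_left hne
  have : IsSimpleModule A (B ⧸ N) := isSimpleModule_iff_isCoatom.2 hN
  set M := Module.annihilator A (B ⧸ N)
  have hM : M.IsMaximal := IsSimpleModule.annihilator_isMaximal
  set J := M.map (algebraMap A B)
  have hJN : (J : Set B) ⊆ N := map_annihilator_quotient_subset N
  obtain ⟨b, -, hb⟩ := SetLike.exists_of_lt hN.lt_top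
  have hJA : (J : Set B) ⊆ A := by
    refine ideal_subset_of_forall_sub_notMem (b := b) hA J fun a ha hba => hb ?_
    have haN : a ∈ N := hAN (Algebra.mem_bot.2 ⟨⟨a, ha⟩, rfl⟩)
    simpa using N.add_mem (hJN hba) haN
  have hJ : J ≠ ⊤ := fun h => hb (hJN (h ▸ Submodule.mem_top))
  have hMJ : M = J.comap (algebraMap A B) :=
    hM.eq_of_le (Ideal.comap_ne_top _ hJ) Ideal.le_comap_map
  exact ⟨J, hJA, hMJ ▸ hM⟩

lemma exists_isMaximal_forall_mul_mem (hA : IsCoatom A) {J Q : Ideal B} (hJA : (J : Set B) ⊆ A)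
    (hJ : (J.comap (algebraMap A B)).IsMaximal) (hJQ : J ≤ Q) (hQ : Q ≠ ⊤)
    (hbQ : b ∈ Q) (hbA : b ∉ A) : ∃ Q' : Ideal B, Q'.IsMaximal ∧ ∀ q ∈ Q', q * b ∈ A := by
  have mem_J {a : B} (ha : a ∈ A) (haQ : a ∈ Q) : a ∈ J := by
    have hcomap : J.comap (algebraMap A B) = Q.comap (algebraMap A B) :=
      hJ.eq_of_le (Ideal.comap_ne_top _ hQ) (Ideal.comap_mono hJQ)
    exact hcomap.ge (show (⟨a, ha⟩ : A) ∈ Q.comap (algebraMap A B) from haQ)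
  have hcolon : J.colon {b} ≠ ⊤ := fun h => hbA <| hJA <| by
    simpa using Submodule.mem_colon_singleton.1 ((Ideal.eq_top_iff_one _).1 h)
  obtain ⟨Q', hQ', hle⟩ := Ideal.exists_le_maximal _ hcolon
  have hsub : ((Q' * Ideal.span {b} : Ideal B) : Set B) ⊆ A := by
    refine ideal_subset_of_forall_sub_notMem (b := b) hA _ fun a ha hba => hQ'.ne_top ?_
    obtain ⟨q, hq, hqb⟩ := Ideal.mem_mul_span_singleton.1 hba
    have ha_eq : a = (1 - q) * b := by linear_combination hqb
    have haJ : a ∈ J := mem_J ha (ha_eq ▸ Q.mul_mem_left _ hbQ)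
    have h1q : 1 - q ∈ Q' :=
      hle (Submodule.mem_colon_singleton.2 (show (1 - q) * b ∈ J from ha_eq ▸ haJ))
    exact (Ideal.eq_top_iff_one _).2 (by simpa using Q'.add_mem h1q hq)
  exact ⟨Q', hQ', fun q hq => hsub (Ideal.mem_mul_span_singleton.2 ⟨q, hq, rfl⟩)⟩

lemma toSubmodule_sup_span_eq_top (hA : IsCoatom A) (hb : b ∉ A)
    (hmul : ∀ x, x * b ∈ Subalgebra.toSubmodule A ⊔ Submodule.span R {b}) :
    Subalgebra.toSubmodule A ⊔ Submodule.span R {b} = ⊤ := by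
  set N := Subalgebra.toSubmodule A ⊔ Submodule.span R {b}
  have hAN : Subalgebra.toSubmodule A ≤ N := le_sup_left
  have mul_mem_N : ∀ x y, x ∈ N → y ∈ N → x * y ∈ N := by
    intro x y hx hy
    obtain ⟨a, ha, _, hs, rfl⟩ := Submodule.mem_sup.1 hx
    obtain ⟨d, hd, _, ht, rfl⟩ := Submodule.mem_sup.1 hy
    obtain ⟨s, rfl⟩ := Submodule.mem_span_singleton.1 hs
    obtain ⟨t, rfl⟩ := Submodule.mem_span_singleton.1 ht
    have expand : (a + s • b) * (d + t • b) = a * d + (t • a + s • (d + t • b)) * b := by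
      simp only [Algebra.smul_def]
      ring
    exact expand ▸ N.add_mem (hAN (A.mul_mem ha hd)) (hmul _)
  set C := N.toSubalgebra (hAN A.one_mem) mul_mem_N
  have hbC : b ∈ C := Submodule.mem_sup_right (Submodule.mem_span_singleton_self b)
  have hC : C = ⊤ := (hA.le_iff.1 (show A ≤ C from hAN)).resolve_right fun h => hb (h ▸ hbC)
  exact eq_top_iff.2 fun x _ => (hC ▸ Algebra.mem_top : x ∈ C)

lemma isCoatom_toSubmodule [Algebra.IsIntegral R B] (hres : IsResiduallySurjective R B)
    (hA : IsCoatom A) : IsCoatom (Subalgebra.toSubmodule A) := by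
  refine ⟨fun h => hA.1 (Algebra.toSubmodule_eq_top.1 h), fun N hAN => ?_⟩
  obtain ⟨b, hbN, hbA⟩ := SetLike.exists_of_lt hAN
  obtain ⟨J, hJA, hJ⟩ := exists_ideal_subset_isMaximal_comap hA
  have hJ_top : J ≠ ⊤ := fun h => hbA (hJA (h ▸ Submodule.mem_top))
  obtain ⟨Q, hQ, hJQ⟩ := Ideal.exists_le_maximal J hJ_top
  obtain ⟨r, hr⟩ := hres.exists_sub_algebraMap_mem hQ b
  set b' := b - algebraMap R B r
  have hbN' : b' ∈ N := N.sub_mem hbN (hAN.le (A.algebraMap_mem r))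
  have hbA' : b' ∉ A := fun h => hbA (by simpa [b'] using A.add_mem h (A.algebraMap_mem r))
  obtain ⟨Q', hQ', hmul⟩ := exists_isMaximal_forall_mul_mem hA hJA hJ hJQ hQ.ne_top hr hbA'
  rw [eq_top_iff, ← toSubmodule_sup_span_eq_top hA hbA' fun x => ?_]
  · exact sup_le hAN.le ((Submodule.span_singleton_le_iff_mem _ _).2 hbN')
  · obtain ⟨t, ht⟩ := hres.exists_sub_algebraMap_mem hQ' x
    have split : x * b' = (x - algebraMap R B t) * b' + t • b' := by
      rw [Algebra.smul_def]
      ring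
    exact split ▸ Submodule.add_mem_sup (hmul _ ht)
      (Submodule.smul_mem _ t (Submodule.mem_span_singleton_self b'))

end Coatom

/-! ### Infra-integral extensions -/

section InfraIntegral

variable {R S : Type*} [CommRing R] [CommRing S] [Algebra R S] {A B T : Subalgebra R S}

lemma map_val_comap_val (h : A ≤ B) : (A.comap B.val).map B.val = A :=
  Subalgebra.map_comap_eq_self (B.range_val.symm ▸ h)

lemma isCoatom_comap_val_of_covBy (h : A ⋖ B) : IsCoatom (A.comap B.val) := by
  have map_strictMono : StrictMono (Subalgebra.map B.val) :=
    Monotone.strictMono_of_injective (fun _ _ => Subalgebra.map_mono)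
      (Subalgebra.map_injective Subtype.val_injective)
  have map_top : (⊤ : Subalgebra R B).map B.val = B := by rw [Algebra.map_top, B.range_val]
  have map_comap := map_val_comap_val h.le
  refine covBy_top_iff.1 ⟨lt_top_iff_ne_top.2 fun htop => h.ne ?_, fun C hAC hC => ?_⟩
  · rw [← map_comap, htop, map_top]
  · exact h.2 (map_comap.symm.trans_lt (map_strictMono hAC))
      ((map_strictMono hC).trans_eq map_top)

lemma toSubmodule_covBy (hT : IsInfraIntegral R T) (hAB : A ⋖ B) (hBT : B ≤ T) :
    Subalgebra.toSubmodule A ⋖ Subalgebra.toSubmodule B := by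
  have := hT.1
  have hinj := Subalgebra.inclusion_injective hBT
  have : Algebra.IsIntegral R B := Algebra.IsIntegral.of_injective (Subalgebra.inclusion hBT) hinj
  have hres : IsResiduallySurjective R B := hT.isResiduallySurjective.of_injective _ hinj
  have hcov := Submodule.map_covBy_of_injective (f := B.val.toLinearMap) Subtype.val_injective
    (isCoatom_toSubmodule hres (isCoatom_comap_val_of_covBy hAB)).covBy_top
  rwa [← Subalgebra.map_toSubmodule, map_val_comap_val hAB.le, ← Algebra.top_toSubmodule,
    ← Subalgebra.map_toSubmodule, Algebra.map_top, B.range_val] at hcov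

theorem IsInfraIntegral.isCatenarianFromTo (hT : IsInfraIntegral R T) :
    IsCatenarianFromTo A T :=
  .of_map (fun _ _ => toSubmodule_covBy hT) (isCatenarianFromTo_submodule _ _)

theorem stmt_14_general (hFCP : IsFCPExt R S) (hT : IsInfraIntegral R T)
    (hcat : IsCatenarianFromTo T (⊤ : Subalgebra R S)) {n : ℕ} {c : Fin (n + 1) → Subalgebra R S}
    (hc : IsMaxChainFromTo (⊥ : Subalgebra R S) ⊤ n c) (hmem : ∃ i, c i = T) :
    n = extLength (⊥ : Subalgebra R S) T + extLength T (⊤ : Subalgebra R S) := by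
  have := wellFoundedLT_of_finite_chains hFCP
  have := wellFoundedGT_of_finite_chains hFCP
  obtain ⟨i, rfl⟩ := hmem
  rw [hT.isCatenarianFromTo.extLength_eq (hc.take i), hcat.extLength_eq (hc.drop i)]
  exact (Nat.add_sub_of_le i.is_le).symm

end InfraIntegral

/-- Let `R ⊆ S` be an integral FCP extension with t-closure `T`, and
assume `T ⊆ S` is catenarian. Then every maximal chain from `R` to `S` containing `T`
has length `ℓ[R,T] + ℓ[T,S]`. -/
theorem stmt_14 {R S : Type*} [CommRing R] [CommRing S] [Algebra R S]
    (hinj : Function.Injective (algebraMap R S)) (hFCP : IsFCPExt R S)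
    (hint : Algebra.IsIntegral R S)
    (T : Subalgebra R S) (hT : IsTClosure T)
    (hcat : IsCatenarianFromTo T (⊤ : Subalgebra R S))
    (n : ℕ) (c : Fin (n + 1) → Subalgebra R S)
    (hc : IsMaxChainFromTo (⊥ : Subalgebra R S) ⊤ n c)
    (hmem : ∃ i, c i = T) :
    n = extLength (⊥ : Subalgebra R S) T + extLength T (⊤ : Subalgebra R S) :=
  stmt_14_general hFCP hT.1 hcat hc hmem
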